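/- Let H be a 2-edge-connected undirected graph with a DFS tree T rooted at r. If {e,e'} is a cut-pair of H such that both e and e' are edges of T, then there exists a vertex u such that both e and e' lie on the tree path from u to the root r. -/

import Mathlib

/-- A DFS tree of the graph `H`, rooted at `r`, given by a parent function:
it is a spanning tree (every vertex reaches the root by iterating the parent
function, and each non-root vertex is adjacent to its parent), and every edge
of `H` joins a vertex to one of its ancestors. -/
structure DFSTree {V : Type*} (H : SimpleGraph V) (r : V) where
  par : V → V
  par_root : par r = r
  reaches_root : ∀ v : V, ∃ n : ℕ, par^[n] v = r
  par_adj : ∀ v : V, v ≠ r → H.Adj v (par v)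
  edge_anc : ∀ x y : V, H.Adj x y → (∃ n : ℕ, par^[n] x = y) ∨ (∃ n : ℕ, par^[n] y = x)

namespace DFSTree

variable {V : Type*} {H : SimpleGraph V} {r : V} (T : DFSTree H r)

/-- `a` is an ancestor of `b` (every vertex is an ancestor of itself). -/
def Anc (a b : V) : Prop := ∃ n : ℕ, T.par^[n] b = a

/-- `a` is a proper ancestor of `b`. -/
def PAnc (a b : V) : Prop := T.Anc a b ∧ a ≠ b

/-- `(x,y)` is a back-edge: an edge of `H` from `x` to an ancestor `y` of `x`
which is not the tree edge from `x` to its parent. -/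
def BackEdge (x y : V) : Prop := H.Adj x y ∧ T.Anc y x ∧ T.par x ≠ y

/-- The set of descendants of `v` joined by a back-edge to a proper ancestor of `v`. -/
def MSet (v : V) : Set V := {x | T.Anc v x ∧ ∃ y, T.PAnc y v ∧ T.BackEdge x y}

/-- `m = M(v)`: `m` is the nearest common ancestor of all descendants of `v`
joined by a back-edge to a proper ancestor of `v`. -/
def IsM (v m : V) : Prop :=
  (∀ x ∈ T.MSet v, T.Anc m x) ∧ ∀ m' : V, (∀ x ∈ T.MSet v, T.Anc m' x) → T.Anc m' m

/-- The set of descendants of `v` joined by a back-edge to a proper ancestor of `p(v)`. -/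
def MpSet (v : V) : Set V := {x | T.Anc v x ∧ ∃ y, T.PAnc y (T.par v) ∧ T.BackEdge x y}

/-- `m = M_p(v)`: `m` is the nearest common ancestor of all descendants of `v`
joined by a back-edge to a proper ancestor of `p(v)`. -/
def IsMp (v m : V) : Prop :=
  (∀ x ∈ T.MpSet v, T.Anc m x) ∧ ∀ m' : V, (∀ x ∈ T.MpSet v, T.Anc m' x) → T.Anc m' m

/-- `h = high(v)`: `h` is the deepest proper ancestor of `v` joined by a
back-edge to a descendant of `v`. -/
def IsHigh (v h : V) : Prop :=
  T.PAnc h v ∧ (∃ x, T.Anc v x ∧ T.BackEdge x h) ∧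
    ∀ h' : V, T.PAnc h' v → (∃ x, T.Anc v x ∧ T.BackEdge x h') → T.Anc h' h

/-- `h = high_p(v)`: `h` is the deepest proper ancestor of `p(v)` joined by a
back-edge to a descendant of `v`. -/
def IsHighP (v h : V) : Prop :=
  T.PAnc h (T.par v) ∧ (∃ x, T.Anc v x ∧ T.BackEdge x h) ∧
    ∀ h' : V, T.PAnc h' (T.par v) → (∃ x, T.Anc v x ∧ T.BackEdge x h') → T.Anc h' h

/-- `l = low(v)`: `l` is the proper ancestor of `v` nearest to the root joined
by a back-edge to a descendant of `v`. -/
def IsLow (v l : V) : Prop :=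
  T.PAnc l v ∧ (∃ x, T.Anc v x ∧ T.BackEdge x l) ∧
    ∀ l' : V, T.PAnc l' v → (∃ x, T.Anc v x ∧ T.BackEdge x l') → T.Anc l l'

end DFSTree

/-- `{v, e}` is a vertex-edge cut-pair of `H`: `e` is an edge of `H` and deleting
both `v` (with its incident edges) and `e` disconnects `H`. -/
def VECutPair {V : Type*} (H : SimpleGraph V) (v : V) (e : Sym2 V) : Prop :=
  e ∈ H.edgeSet ∧ ¬ ((H.deleteEdges {e}).induce {u | u ≠ v}).Connected

/-- `{e, e'}` is a cut-pair of `H`: `e` and `e'` are distinct edges of `H` whose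
deletion disconnects `H`. -/
def ECutPair {V : Type*} (H : SimpleGraph V) (e e' : Sym2 V) : Prop :=
  e ∈ H.edgeSet ∧ e' ∈ H.edgeSet ∧ e ≠ e' ∧ ¬ (H.deleteEdges {e, e'}).Connected

/-- An undirected graph is 2-edge-connected if it is connected and has no bridge. -/
def TwoEdgeConnected {W : Type*} (G : SimpleGraph W) : Prop :=
  G.Connected ∧ ∀ e ∈ G.edgeSet, ¬ G.IsBridge e

/-- An undirected graph is 2-vertex-connected if it has at least three vertices,
is connected, and deleting any single vertex leaves it connected. -/
def TwoVertexConnected {W : Type*} (G : SimpleGraph W) : Prop :=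
  3 ≤ Nat.card W ∧ G.Connected ∧ ∀ v : W, (G.induce {u | u ≠ v}).Connected

/-!
Delete the tree edges above the vertices of an antichain `S` of non-root vertices, none of these
edges being a bridge. A vertex below no member of `S` still climbs to the root. A vertex below
`u ∈ S` climbs to `u`; since the edge above `u` is not a bridge, some back-edge leads from the
subtree of `u` to a proper ancestor `y` of `u`. No back-edge was deleted, and `y` lies below no
member of `S` because `S` is an antichain. So the graph stays connected, and the two edges of a
cut-pair cannot lie above incomparable vertices.
-/

namespace DFSTree

section Ancestors

variable {V : Type*} {H : SimpleGraph V} {r : V} (T : DFSTree H r) {a b c u v : V}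

theorem anc_refl (v : V) : T.Anc v v := ⟨0, rfl⟩

theorem par_anc (v : V) : T.Anc (T.par v) v := ⟨1, rfl⟩

theorem root_anc (v : V) : T.Anc r v := T.reaches_root v

theorem par_iterate_root (n : ℕ) : T.par^[n] r = r := Function.iterate_fixed T.par_root n

variable {T}

theorem Anc.trans (hab : T.Anc a b) (hbc : T.Anc b c) : T.Anc a c := by
  obtain ⟨m, rfl⟩ := hab
  obtain ⟨n, rfl⟩ := hbc
  exact ⟨m + n, Function.iterate_add_apply _ _ _ _⟩

theorem Anc.eq_root (h : T.Anc a r) : a = r := by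
  obtain ⟨n, rfl⟩ := h
  exact T.par_iterate_root n

theorem Anc.anc_par_of_ne (h : T.Anc a v) (hne : v ≠ a) : T.Anc a (T.par v) := by
  obtain ⟨_ | n, hn⟩ := h
  · exact absurd hn hne
  · exact ⟨n, hn⟩

theorem Anc.comparable (ha : T.Anc a v) (hb : T.Anc b v) : T.Anc a b ∨ T.Anc b a := by
  obtain ⟨m, rfl⟩ := ha
  obtain ⟨n, rfl⟩ := hb
  rcases le_total m n with h | h
  · exact .inr ⟨n - m, by rw [← Function.iterate_add_apply, Nat.sub_add_cancel h]⟩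
  · exact .inl ⟨m - n, by rw [← Function.iterate_add_apply, Nat.sub_add_cancel h]⟩

theorem eq_root_of_isPeriodicPt_par {n : ℕ} (hn : 0 < n)
    (hv : Function.IsPeriodicPt T.par n v) : v = r := by
  obtain ⟨m, hm⟩ := T.reaches_root v
  have hr : Function.IsPeriodicPt T.par n r := T.par_iterate_root n
  exact (hv.iterate m).eq_of_apply_eq_same (hr.iterate m) hn
    (hm.trans (T.par_iterate_root m).symm)

theorem Anc.antisymm (hab : T.Anc a b) (hba : T.Anc b a) : a = b := by
  obtain ⟨n, rfl⟩ := hab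
  obtain ⟨m, hm⟩ := hba
  rcases Nat.eq_zero_or_pos n with rfl | hn
  · rfl
  · have hperiodic : Function.IsPeriodicPt T.par (m + n) b :=
      (Function.iterate_add_apply _ _ _ _).trans hm
    obtain rfl := eq_root_of_isPeriodicPt_par (by lia) hperiodic
    exact T.par_iterate_root n

theorem not_anc_par (hv : v ≠ r) : ¬ T.Anc v (T.par v) :=
  fun h => (T.par_adj v hv).ne (h.antisymm (T.par_anc v))

theorem eq_of_isAntichain_of_anc {S : Set V} (hS : IsAntichain T.Anc S) (ha : a ∈ S) (hb : b ∈ S)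
    (hav : T.Anc a v) (hbv : T.Anc b v) : a = b :=
  (hav.comparable hbv).elim (hS.eq ha hb) (hS.eq' ha hb)

end Ancestors

section TreeEdges

variable {V : Type*} {H : SimpleGraph V} {r : V} (T : DFSTree H r) {S : Set V} {a u v x y : V}

/-- The tree edge joining `v` to its parent. For the root it is the degenerate pair `s(r, r)`. -/
def treeEdge (v : V) : Sym2 V := s(v, T.par v)

variable {T}

theorem eq_of_treeEdge_eq (hu : u ≠ r) (h : T.treeEdge u = T.treeEdge v) : u = v := by
  rcases Sym2.eq_iff.1 h with ⟨huv, -⟩ | ⟨huv, hvu⟩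
  · exact huv
  · exact absurd (hvu ▸ huv ▸ T.par_anc v) (not_anc_par hu)

theorem BackEdge.ne_treeEdge (hxy : T.BackEdge x y) (u : V) : s(x, y) ≠ T.treeEdge u := by
  obtain ⟨hadj, hanc, hpar⟩ := hxy
  intro h
  rcases Sym2.eq_iff.1 h with ⟨rfl, hy⟩ | ⟨rfl, rfl⟩
  · exact hpar hy.symm
  · exact hadj.ne ((T.par_anc y).antisymm hanc)

theorem MSet_nonempty_of_not_isBridge (hu : u ≠ r) (hbridge : ¬ H.IsBridge (T.treeEdge u)) :
    (T.MSet u).Nonempty := by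
  obtain ⟨walk⟩ := not_not.1 hbridge
  obtain ⟨⟨⟨x, y⟩, hxy⟩, -, hux, huy⟩ :=
    walk.exists_boundary_dart {x | T.Anc u x} (T.anc_refl u) (not_anc_par hu)
  rw [Set.mem_ofPred_eq] at hux huy
  obtain ⟨hadj, hne⟩ := SimpleGraph.deleteEdges_adj.1 hxy
  have hyx : T.Anc y x := (T.edge_anc x y hadj).resolve_right fun h => huy (hux.trans h)
  have hyu : T.Anc y u := (hyx.comparable hux).resolve_right huy
  refine ⟨x, hux, y, ⟨hyu, fun h => huy (h ▸ T.anc_refl y)⟩, hadj, hyx, ?_⟩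
  rintro rfl
  obtain rfl : x = u := by_contra fun hxu => huy (hux.anc_par_of_ne hxu)
  exact hne rfl

theorem BackEdge.deleteEdges_treeEdge_adj (hxy : T.BackEdge x y) (S : Set V) :
    (H.deleteEdges (T.treeEdge '' S)).Adj x y :=
  SimpleGraph.deleteEdges_adj.2 ⟨hxy.1, fun ⟨u, _, hu⟩ => hxy.ne_treeEdge u hu.symm⟩

theorem deleteEdges_treeEdge_adj_par (hv : v ≠ r) (hvS : v ∉ S) :
    (H.deleteEdges (T.treeEdge '' S)).Adj v (T.par v) :=
  SimpleGraph.deleteEdges_adj.2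
    ⟨T.par_adj v hv, fun ⟨_, huS, hu⟩ => hvS (eq_of_treeEdge_eq hv hu.symm ▸ huS)⟩

theorem Anc.reachable_deleteEdges_treeEdge (hav : T.Anc a v)
    (hS : ∀ w ∈ S, T.Anc w v → T.Anc w a) :
    (H.deleteEdges (T.treeEdge '' S)).Reachable v a := by
  obtain ⟨n, hn⟩ := hav
  induction n generalizing v with
  | zero =>
    obtain rfl : v = a := hn
    rfl
  | succ n ih =>
    have hav : T.Anc a v := ⟨n + 1, hn⟩
    rcases eq_or_ne v a with rfl | hva
    · rfl
    have hvr : v ≠ r := by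
      rintro rfl
      exact hva hav.eq_root.symm
    have hvS : v ∉ S := fun hv => hva ((hS v hv (T.anc_refl v)).antisymm hav)
    exact (deleteEdges_treeEdge_adj_par hvr hvS).reachable.trans
      (ih (fun w hw hwv => hS w hw (hwv.trans (T.par_anc v))) hn)

theorem reachable_root_deleteEdges_treeEdge_of_forall_not_anc (hv : ∀ w ∈ S, ¬ T.Anc w v) :
    (H.deleteEdges (T.treeEdge '' S)).Reachable v r :=
  (T.root_anc v).reachable_deleteEdges_treeEdge fun w hw hwv => absurd hwv (hv w hw)

theorem Anc.reachable_deleteEdges_treeEdge_of_mem (huv : T.Anc u v) (hS : IsAntichain T.Anc S)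
    (hu : u ∈ S) : (H.deleteEdges (T.treeEdge '' S)).Reachable v u :=
  huv.reachable_deleteEdges_treeEdge fun w hw hwv =>
    eq_of_isAntichain_of_anc hS hw hu hwv huv ▸ T.anc_refl w

theorem reachable_root_deleteEdges_treeEdge_of_mem (hS : IsAntichain T.Anc S) (hu : u ∈ S)
    (hur : u ≠ r) (hbridge : ¬ H.IsBridge (T.treeEdge u)) :
    (H.deleteEdges (T.treeEdge '' S)).Reachable u r := by
  obtain ⟨x, hux, y, ⟨hyu, hne⟩, hxy⟩ := MSet_nonempty_of_not_isBridge hur hbridge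
  have hy : ∀ w ∈ S, ¬ T.Anc w y := by
    intro w hw hwy
    obtain rfl := eq_of_isAntichain_of_anc hS hw hu (hwy.trans hyu) (T.anc_refl u)
    exact hne (hyu.antisymm hwy)
  have hreach_ux := (hux.reachable_deleteEdges_treeEdge_of_mem hS hu).symm
  have hreach_xy := (hxy.deleteEdges_treeEdge_adj S).reachable
  have hreach_yr := reachable_root_deleteEdges_treeEdge_of_forall_not_anc hy
  exact (hreach_ux.trans hreach_xy).trans hreach_yr

theorem connected_deleteEdges_treeEdge_of_isAntichain (hS : IsAntichain T.Anc S) (hr : r ∉ S)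
    (hbridge : ∀ u ∈ S, ¬ H.IsBridge (T.treeEdge u)) :
    (H.deleteEdges (T.treeEdge '' S)).Connected := by
  refine (SimpleGraph.connected_iff_exists_forall_reachable _).2 ⟨r, fun v => .symm ?_⟩
  by_cases hv : ∃ u ∈ S, T.Anc u v
  · obtain ⟨u, hu, huv⟩ := hv
    have hvu := huv.reachable_deleteEdges_treeEdge_of_mem hS hu
    have hur := reachable_root_deleteEdges_treeEdge_of_mem hS hu (ne_of_mem_of_not_mem hu hr)
      (hbridge u hu)
    exact hvu.trans hur
  · push Not at hv
    exact reachable_root_deleteEdges_treeEdge_of_forall_not_anc hv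

end TreeEdges

end DFSTree

theorem stmt_15_general {V : Type*} {H : SimpleGraph V} {r : V} (T : DFSTree H r) {u₁ u₂ : V}
    (h₁ : u₁ ≠ r) (h₂ : u₂ ≠ r)
    (hbridge₁ : ¬ H.IsBridge s(u₁, T.par u₁)) (hbridge₂ : ¬ H.IsBridge s(u₂, T.par u₂))
    (hcut : ¬ (H.deleteEdges {s(u₁, T.par u₁), s(u₂, T.par u₂)}).Connected) :
    ∃ u : V, T.Anc u₁ u ∧ T.Anc u₂ u := by
  by_contra! hno
  have hantichain : IsAntichain T.Anc {u₁, u₂} :=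
    Set.pairwise_pair.2 fun _ =>
      ⟨fun h => hno u₂ h (T.anc_refl u₂), fun h => hno u₁ (T.anc_refl u₁) h⟩
  have hconn := DFSTree.connected_deleteEdges_treeEdge_of_isAntichain hantichain
    (by simp [h₁.symm, h₂.symm]) (by simp [DFSTree.treeEdge, hbridge₁, hbridge₂])
  rw [Set.image_pair] at hconn
  exact hcut hconn

theorem stmt_15 {V : Type*} [Fintype V] (H : SimpleGraph V) (r : V)
    (T : DFSTree H r) (hH : TwoEdgeConnected H) (u₁ u₂ : V)
    (h₁ : u₁ ≠ r) (h₂ : u₂ ≠ r)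
    (hcut : ECutPair H s(u₁, T.par u₁) s(u₂, T.par u₂)) :
    ∃ u : V, T.Anc u₁ u ∧ T.Anc u₂ u :=
  stmt_15_general T h₁ h₂ (hH.2 _ hcut.1) (hH.2 _ hcut.2.1) hcut.2.2.2
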